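/- arXiv:1101.4698 — 4 statements merged into one kernel-verified Lean document; each statement's English description precedes it below -/
import Mathlib

section
/- For every real number t > 0, the inequality ((1+2t)/(2t^2)) · (ln Γ(t/(1+2t)) − ln Γ(t)) < 1 − ψ(t) holds. -/
/-!
Write `s = t / (1 + 2 t)`, so that `t - s = 2 t² / (1 + 2 t)`. The claim says that the Taylor
remainder `log Γ s - log Γ t - (s - t) ψ(t)` is smaller than `t - s`.

Since `1 / y² ≤ 1 / (y - 1/2) - 1 / (y + 1/2)`, telescoping gives
`ψ'(x) = ∑ 1 / (x + m)² ≤ 1 / x² + 1 / (x + 1/2)`. This is proved here in integrated form: the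
function `majorant x = -log x + (x + 1/2) log (x + 1/2)`, whose second derivative is the
right-hand side, has the property that `majorant - log Γ` is convex on `(0, ∞)`
(`convexOn_majorant_sub`, obtained as a limit along Euler's product for `Γ`). Hence the Taylor
remainder of `log Γ` is at most that of `majorant`. With `h = 2 t` the resulting
elementary inequality is `(1 + 2h) log (1 + 2h) < 2h log (1 + h) + 2h` (`log_ineq`); the two sides
agree at `h = 0`, and their derivatives compare through `log (1 + u) < u` at `u = h / (1 + h)`.
-/

open Real

/-- The digamma function `ψ = Γ′/Γ`. -/
noncomputable def digamma (x : ℝ) : ℝ := deriv Real.Gamma x / Real.Gamma x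

/-- A function with second derivative `1 / x² + 1 / (x + 1/2)`, which dominates `(log Γ)''`. -/
noncomputable def majorant (x : ℝ) : ℝ := -log x + (x + 1 / 2) * log (x + 1 / 2)

lemma hasDerivAt_shift_mul_log (c : ℝ) {y : ℝ} (hy : 0 < y + c) :
    HasDerivAt (fun y => (y + c) * log (y + c)) (log (y + c) + 1) y := by
  have h := ((hasDerivAt_id y).add_const c)
  have h2 := h.mul (h.log hy.ne')
  refine h2.congr_deriv ?_
  simp only [id]
  field_simp

/-- The `m`-th telescoping step: its second derivative is
`1 / (y - 1/2) - 1 / (y + 1/2) - 1 / y² ≥ 0` at `y = x + m + 1`. -/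
lemma convexOn_step (m : ℕ) :
    ConvexOn ℝ (Set.Ioi 0) (fun x : ℝ => (x + (m + 1 / 2)) * log (x + (m + 1 / 2))
      - (x + (m + 3 / 2)) * log (x + (m + 3 / 2)) + log (x + (m + 1))) := by
  have hm : (0 : ℝ) ≤ m := m.cast_nonneg
  have hd : ∀ x ∈ Set.Ioi (0 : ℝ), HasDerivAt (fun x : ℝ =>
      (x + (m + 1 / 2)) * log (x + (m + 1 / 2))
      - (x + (m + 3 / 2)) * log (x + (m + 3 / 2)) + log (x + (m + 1)))
      ((log (x + (m + 1 / 2)) + 1) - (log (x + (m + 3 / 2)) + 1) + 1 / (x + (m + 1))) x := by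
    intro x hx
    have hx : 0 < x := hx
    exact ((hasDerivAt_shift_mul_log _ (by linarith)).sub
      (hasDerivAt_shift_mul_log _ (by linarith))).add
      (((hasDerivAt_id x).add_const _).log (by simp only [id]; linarith))
  refine convexOn_of_hasDerivWithinAt2_nonneg (convex_Ioi 0)
    (f' := fun x => (log (x + (m + 1 / 2)) + 1) - (log (x + (m + 3 / 2)) + 1) + 1 / (x + (m + 1)))
    (f'' := fun x => 1 / (x + (m + 1 / 2)) - 1 / (x + (m + 3 / 2)) + -1 / (x + (m + 1)) ^ 2)
    (fun x hx => (hd x hx).continuousAt.continuousWithinAt) ?_ ?_ ?_ <;>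
    rw [interior_Ioi] <;> intro x hx <;> have hx' : 0 < x := hx
  · exact (hd x hx).hasDerivWithinAt
  · have h (c : ℝ) := (hasDerivAt_id x).add_const c
    have h1 := (((h (m + 1 / 2)).log (by simp only [id]; linarith)).add_const 1).sub
      (((h (m + 3 / 2)).log (by simp only [id]; linarith)).add_const 1)
    have h2 := (h (m + 1)).inv (by simp only [id]; linarith)
    simp only [one_div] at h1 ⊢
    exact (h1.add h2).hasDerivWithinAt
  · have h1 : 0 < x + (m + 1 / 2) := by linarith
    have h2 : 0 < x + (m + 3 / 2) := by linarith
    have h3 : 0 < x + (m + 1) := by linarith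
    have key : 1 / (x + (m + 1 / 2)) - 1 / (x + (m + 3 / 2)) + -1 / (x + (m + 1)) ^ 2
        = (1 / 4) / ((x + (m + 1 / 2)) * (x + (m + 3 / 2)) * (x + (m + 1)) ^ 2) := by
      field_simp
      ring
    rw [key]
    positivity

/-- Convexity of the partial sum `(x + 1/2) log (x + 1/2) + ∑ log (x + m + 1)` after removal of
its telescoped tail. -/
lemma convexOn_partial (n : ℕ) :
    ConvexOn ℝ (Set.Ioi 0) (fun x : ℝ => (x + 1 / 2) * log (x + 1 / 2)
      + ∑ m ∈ Finset.range n, log (x + (m + 1))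
      - (x + (n + 1 / 2)) * log (x + (n + 1 / 2))) := by
  induction n with
  | zero => simpa using convexOn_const (0 : ℝ) (convex_Ioi (0 : ℝ))
  | succ k ih =>
    refine (ih.add (convexOn_step k)).congr fun x _ => ?_
    have : (k : ℝ) + 1 + 1 / 2 = k + 3 / 2 := by ring
    simp only [Pi.add_apply, Finset.sum_range_succ]
    push_cast
    rw [this]
    ring

lemma convexOn_majorant_sub_seq (n : ℕ) :
    ConvexOn ℝ (Set.Ioi 0) (fun x : ℝ => majorant x - BohrMollerup.logGammaSeq x n) := by
  have hn : (0 : ℝ) ≤ n := n.cast_nonneg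
  have h1 : ConvexOn ℝ (Set.Ioi 0)
      (fun x : ℝ => (x + (n + 1 / 2)) * log (x + (n + 1 / 2))) := by
    have := convexOn_mul_log.translate_left (n + 1 / 2 : ℝ)
    refine (this.subset ?_ (convex_Ioi 0)).congr fun x _ => rfl
    intro x hx
    have hx : 0 < x := hx
    simp only [Set.mem_preimage, Set.mem_Ici]
    linarith
  have h2 : ConvexOn ℝ (Set.Ioi 0) (fun x : ℝ => x * (-log n) - log n.factorial) := by
    refine ⟨convex_Ioi 0, fun x _ y _ a b _ _ hab => le_of_eq ?_⟩
    simp only [smul_eq_mul]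
    linear_combination log n.factorial * hab
  refine (((convexOn_partial n).add h1).add h2).congr fun x _ => ?_
  simp only [Pi.add_apply, majorant, BohrMollerup.logGammaSeq, Finset.sum_range_succ']
  push_cast
  ring_nf

lemma convexOn_majorant_sub :
    ConvexOn ℝ (Set.Ioi 0) (fun x : ℝ => majorant x - log (Gamma x)) := by
  refine ⟨convex_Ioi 0, fun x hx y hy a b ha hb hab => ?_⟩
  have hlim : ∀ z ∈ Set.Ioi (0 : ℝ), Filter.Tendsto
      (fun n => majorant z - BohrMollerup.logGammaSeq z n) Filter.atTop
      (nhds (majorant z - log (Gamma z))) := fun z hz =>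
    tendsto_const_nhds.sub (BohrMollerup.tendsto_log_gamma hz)
  exact le_of_tendsto_of_tendsto' (hlim _ (convex_Ioi 0 hx hy ha hb hab))
    (((hlim x hx).const_smul a).add ((hlim y hy).const_smul b))
    fun n => (convexOn_majorant_sub_seq n).2 hx hy ha hb hab

lemma log_ineq {h : ℝ} (hh : 0 < h) :
    (1 + 2 * h) * log (1 + 2 * h) < 2 * h * log (1 + h) + 2 * h := by
  have hd : ∀ x : ℝ, 0 ≤ x → HasDerivAt
      (fun x => 2 * x * log (1 + x) + 2 * x - (1 + 2 * x) * log (1 + 2 * x))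
      (2 * (x / (1 + x) - log ((1 + 2 * x) / (1 + x)))) x := by
    intro x hx
    have a1 : HasDerivAt (fun x : ℝ => 1 + x) 1 x := (hasDerivAt_id x).const_add 1
    have a2 : HasDerivAt (fun x : ℝ => 2 * x) 2 x := by
      simpa using (hasDerivAt_id x).const_mul (2 : ℝ)
    have a3 : HasDerivAt (fun x : ℝ => 1 + 2 * x) 2 x := a2.const_add 1
    have p1 : 0 < 1 + x := by linarith
    have p2 : 0 < 1 + 2 * x := by linarith
    refine (((a2.mul (a1.log p1.ne')).add a2).sub (a3.mul (a3.log p2.ne'))).congr_deriv ?_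
    rw [log_div p2.ne' p1.ne']
    field_simp
    ring
  have hmono : StrictMonoOn
      (fun x : ℝ => 2 * x * log (1 + x) + 2 * x - (1 + 2 * x) * log (1 + 2 * x))
      (Set.Ici 0) := by
    refine strictMonoOn_of_deriv_pos (convex_Ici 0)
      (fun x hx => (hd x hx).continuousAt.continuousWithinAt) ?_
    rw [interior_Ici]
    intro x hx
    have hx : 0 < x := hx
    rw [(hd x hx.le).deriv]
    have p1 : 0 < 1 + x := by linarith
    have e : (1 + 2 * x) / (1 + x) - 1 = x / (1 + x) := by
      field_simp
      ring
    have q : 0 < x / (1 + x) := by positivity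
    have := log_lt_sub_one_of_pos (x := (1 + 2 * x) / (1 + x)) (by positivity)
      (by intro h0; rw [h0] at e; linarith)
    linarith
  have := hmono (Set.mem_Ici.2 le_rfl) (Set.mem_Ici.2 hh.le) hh
  simp only [mul_zero, add_zero, log_one, sub_zero] at this
  linarith

theorem stmt_0 (t : ℝ) (ht : 0 < t) :
    (1 + 2 * t) / (2 * t ^ 2) *
      (Real.log (Real.Gamma (t / (1 + 2 * t))) - Real.log (Real.Gamma t)) <
      1 - digamma t := by
  have p : 0 < 1 + 2 * t := by linarith
  set s := t / (1 + 2 * t) with hs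
  have hs0 : 0 < s := by positivity
  have hst : t - s = 2 * t ^ 2 / (1 + 2 * t) := by
    rw [hs]
    field_simp
    ring
  have hpos : 0 < t - s := by rw [hst]; positivity
  have hG : HasDerivAt (fun x => log (Gamma x)) (digamma t) t := by
    refine (differentiableAt_Gamma fun m => ?_).hasDerivAt.log (Gamma_pos_of_pos ht).ne'
    have : (0 : ℝ) ≤ m := m.cast_nonneg
    linarith
  have hF : HasDerivAt majorant (-t⁻¹ + (log (t + 1 / 2) + 1)) t :=
    (hasDerivAt_log ht.ne').neg.add (hasDerivAt_shift_mul_log _ (by linarith))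
  have hslope := convexOn_majorant_sub.slope_le_of_hasDerivAt (Set.mem_Ioi.2 hs0)
    (Set.mem_Ioi.2 ht) (by linarith) (hF.sub hG)
  rw [slope_def_field, div_le_iff₀ hpos] at hslope
  have hinv : (1 + 2 * t) / (2 * t ^ 2) = (t - s)⁻¹ := by rw [hst, inv_div]
  rw [hinv, inv_mul_lt_iff₀ hpos]
  -- What remains is the remainder estimate for the majorant itself.
  have key : majorant s - majorant t + (t - s) * (log (t + 1 / 2) - t⁻¹) < 0 := by
    have l1 : log s = log t - log (1 + 2 * t) := log_div ht.ne' p.ne'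
    have l2 : log (t + 1 / 2) = log (1 + 2 * t) - log 2 := by
      rw [← log_div p.ne' two_ne_zero]
      congr 1
      ring
    have l3 : log (s + 1 / 2) = log (1 + 2 * (2 * t)) - log 2 - log (1 + 2 * t) := by
      rw [← log_div (by positivity) two_ne_zero, ← log_div (by positivity) p.ne']
      congr 1
      rw [hs]
      field_simp
      ring
    have hi := log_ineq (h := 2 * t) (by linarith)
    have e : majorant s - majorant t + (t - s) * (log (t + 1 / 2) - t⁻¹)
        = ((1 + 2 * (2 * t)) * log (1 + 2 * (2 * t))
          - (2 * (2 * t) * log (1 + 2 * t) + 2 * (2 * t))) / (2 * (1 + 2 * t)) := by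
      unfold majorant
      rw [l3, l1, l2, hs]
      field_simp
      ring
    rw [e]
    exact div_neg_of_neg_of_pos (by linarith) (by linarith)
  linarith
end

section
/- For every y ∈ (−1, −1/2) and every x ≥ −2(y+1)^2/(1+2y), the quantity x·ψ(x+y+1) − ln Γ(x+y+1) + ln Γ(y+1) − x^2/(2(y+1)(x+y+1)) is negative. -/
/-!
Put `a = y + 1 ∈ (0, 1/2)` and `Φ a x = x ψ(x+a) - log Γ(x+a) + log Γ(a)`.

The functional equation of `Γ` gives `Φ a x = Φ (a+1) x + (log (1 + x/a) - x/(x+a))`.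
The function `W b x = x - b log (1 + x/b)` satisfies the matching inequality
`log (1 + x/c) - x/(x+c) + W (c+1/2) x ≤ W (c-1/2) x`, which after differentiation in `x` is
`1/m² ≤ 1/(m-1/2) - 1/(m+1/2)` with `m = x + c`. Hence `Φ c x - W (c-1/2) x` does not decrease
when `c` grows by one. Convexity of `log Γ` bounds `Φ (c+n) x` above by a null sequence in `n`, and `W ≥ 0`, so
`Φ c x ≤ W (c-1/2) x` (lemma `Phi_le_W`).

With `c = a + 1` the quantity to bound is at most
`G a x = log (1 + x/a) - x/(x+a) + W (a+1/2) x - x²/(2a(x+a))`. The hypothesis on `x` says exactly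
`2a(x+a) ≤ x`, and there `G a` is decreasing, so it remains to look at the end point
`x₀ = 2a²/(1-2a)`. With `u = 2a`, one finds
`G a x₀ = (1+u)/2 · log (1+u) - (1-u)/2 · log (1-u) - u`, which vanishes at `u = 0` and
has derivative `log (1-u²)/2 < 0`.
-/

open Real

/-! ### The digamma function -/

lemma hasDerivAt_logGamma {z : ℝ} (hz : 0 < z) :
    HasDerivAt (fun t => Real.log (Real.Gamma t)) (digamma z) z := by
  have hd : DifferentiableAt ℝ Real.Gamma z := Real.differentiableAt_Gamma (fun m => by
    have : (0 : ℝ) ≤ m := Nat.cast_nonneg m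
    intro h; linarith)
  exact hd.hasDerivAt.log (Real.Gamma_pos_of_pos hz).ne'

lemma logGamma_add_one {z : ℝ} (hz : 0 < z) :
    Real.log (Real.Gamma (z + 1)) = Real.log z + Real.log (Real.Gamma z) := by
  rw [Real.Gamma_add_one hz.ne', Real.log_mul hz.ne' (Real.Gamma_pos_of_pos hz).ne']

lemma digamma_add_one {z : ℝ} (hz : 0 < z) : digamma (z + 1) = digamma z + 1 / z := by
  have h1 : HasDerivAt (fun t => Real.log (Real.Gamma (t + 1))) (digamma (z + 1)) z :=
    (hasDerivAt_logGamma (by linarith : 0 < z + 1)).comp_add_const z 1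
  have h2 : HasDerivAt (fun t => Real.log t + Real.log (Real.Gamma t))
      (z⁻¹ + digamma z) z := (Real.hasDerivAt_log hz.ne').add (hasDerivAt_logGamma hz)
  have h3 := h2.congr_of_eventuallyEq
    (f₁ := fun t => Real.log (Real.Gamma (t + 1))) (by
      filter_upwards [lt_mem_nhds hz] with t ht using logGamma_add_one ht)
  rw [h1.unique h3, one_div, add_comm]

/-- Tangent line inequality for the convex function `log Γ`. -/
lemma logGamma_tangent {s t : ℝ} (hs : 0 < s) (ht : 0 < t) :
    digamma s * (t - s) ≤ Real.log (Real.Gamma t) - Real.log (Real.Gamma s) := by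
  have hc : ConvexOn ℝ (Set.Ioi 0) (fun t => Real.log (Real.Gamma t)) :=
    Real.convexOn_log_Gamma
  rcases lt_trichotomy s t with h | h | h
  · have := hc.le_slope_of_hasDerivAt hs ht h (hasDerivAt_logGamma hs)
    rw [slope_def_field, le_div_iff₀ (by linarith)] at this
    exact this
  · subst h; simp
  · have := hc.slope_le_of_hasDerivAt ht hs h (hasDerivAt_logGamma hs)
    rw [slope_def_field, div_le_iff₀ (by linarith)] at this
    linarith

lemma digamma_le_log {z : ℝ} (hz : 0 < z) : digamma z ≤ Real.log z := by
  have := logGamma_tangent hz (by linarith : 0 < z + 1)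
  rw [logGamma_add_one hz] at this
  linarith

lemma log_le_digamma_add_one {z : ℝ} (hz : 0 < z) : Real.log z ≤ digamma (z + 1) := by
  have := logGamma_tangent (by linarith : 0 < z + 1) hz
  rw [logGamma_add_one hz] at this
  linarith

/-! ### The bound on `x ψ(x+c) - log Γ(x+c) + log Γ(c)` -/

/-- The gamma-function part of the quantity to be estimated, with `c` in place of `y + 1`. -/
noncomputable def Phi (c x : ℝ) : ℝ :=
  x * digamma (x + c) - Real.log (Real.Gamma (x + c)) + Real.log (Real.Gamma c)

/-- `x - b log (1 + x/b) = ∫₀ˣ t/(b+t) dt`. -/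
noncomputable def W (b x : ℝ) : ℝ := x - b * (Real.log (x + b) - Real.log b)

/-- `log (1 + x/c) - x/(x+c) = ∫₀ˣ t/(c+t)² dt`, the increment `Phi c x - Phi (c+1) x`. -/
noncomputable def T (c x : ℝ) : ℝ := Real.log (x + c) - Real.log c - x / (x + c)

lemma hasDerivAt_W {b x : ℝ} (h : 0 < x + b) : HasDerivAt (W b) (x / (x + b)) x := by
  have h1 : HasDerivAt (fun t : ℝ => Real.log (t + b)) (1 / (x + b)) x :=
    ((hasDerivAt_id x).add_const b).log h.ne'
  have h2 := (hasDerivAt_id x).sub ((h1.sub_const (Real.log b)).const_mul b)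
  refine h2.congr_deriv ?_
  field_simp
  ring

lemma hasDerivAt_T {c x : ℝ} (h : 0 < x + c) : HasDerivAt (T c) (x / (x + c) ^ 2) x := by
  have h0 : HasDerivAt (fun t : ℝ => t + c) 1 x := (hasDerivAt_id x).add_const c
  have h1 : HasDerivAt (fun t : ℝ => Real.log (t + c)) (1 / (x + c)) x := h0.log h.ne'
  have h2 := (h1.sub_const (Real.log c)).sub ((hasDerivAt_id x).div h0 h.ne')
  refine h2.congr_deriv ?_
  simp only [id]
  field_simp
  ring

lemma Phi_shift {c x : ℝ} (hc : 0 < c) (hx : 0 ≤ x) :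
    Phi c x = Phi (c + 1) x + T c x := by
  have hz : 0 < x + c := by linarith
  unfold Phi T
  rw [← add_assoc, digamma_add_one hz, logGamma_add_one hz, logGamma_add_one hc]
  ring

lemma W_nonneg {b x : ℝ} (hb : 0 < b) (hx : 0 ≤ x) : 0 ≤ W b x := by
  have hp : 0 < x + b := by linarith
  have := Real.log_le_sub_one_of_pos (div_pos hp hb)
  rw [Real.log_div hp.ne' hb.ne', add_div, div_self hb.ne', add_sub_cancel_right,
    le_div_iff₀ hb] at this
  unfold W
  linarith

/-- The comparison `1/m² ≤ 1/(m-1/2) - 1/(m+1/2)`, integrated. -/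
lemma T_add_W_le {c x : ℝ} (hc : 1 / 2 < c) (hx : 0 ≤ x) :
    T c x + W (c + 1 / 2) x ≤ W (c - 1 / 2) x := by
  have hd : ∀ t : ℝ, 0 ≤ t → HasDerivAt (fun t => T c t + W (c + 1 / 2) t - W (c - 1 / 2) t)
      (t / (t + c) ^ 2 + t / (t + (c + 1 / 2)) - t / (t + (c - 1 / 2))) t := fun t ht =>
    ((hasDerivAt_T (by linarith)).add (hasDerivAt_W (by linarith))).sub
      (hasDerivAt_W (by linarith))
  have hanti : AntitoneOn (fun t => T c t + W (c + 1 / 2) t - W (c - 1 / 2) t) (Set.Ici 0) := by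
    refine antitoneOn_of_hasDerivWithinAt_nonpos (convex_Ici 0)
      (fun t ht => (hd t ht).continuousAt.continuousWithinAt)
      (fun t ht => (hd t (interior_subset ht)).hasDerivWithinAt) (fun t ht => ?_)
    have ht0 : 0 ≤ t := interior_subset ht
    have hm : 1 / 2 < t + c := by linarith
    obtain ⟨m, hmd⟩ : ∃ m, m = t + c := ⟨_, rfl⟩
    rw [← add_assoc, ← add_sub_assoc, ← hmd]
    rw [← hmd] at hm
    have h1 : 0 < m - 1 / 2 := by linarith
    have h2 : 0 < m + 1 / 2 := by linarith
    have h3 : 0 < m := by linarith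
    have key : t / m ^ 2 + t / (m + 1 / 2) - t / (m - 1 / 2)
        = -(t / 4 / (m ^ 2 * (m + 1 / 2) * (m - 1 / 2))) := by
      rw [div_add_div _ _ (by positivity) h2.ne', div_sub_div _ _ (by positivity) h1.ne', ← neg_div,
        div_eq_div_iff (by positivity) (by positivity)]
      ring
    rw [key]
    exact neg_nonpos.2 (by positivity)
  have := hanti (Set.mem_Ici.2 le_rfl) (Set.mem_Ici.2 hx) hx
  simp only [T, W, zero_add, sub_self, mul_zero, zero_div] at this
  simp only [T, W]
  linarith

/-- Convexity of `log Γ` makes `Phi` small for large `c`. -/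
lemma Phi_le_log {c x : ℝ} (hc : 0 < c) (hx : 0 ≤ x) :
    Phi (c + 1) x ≤ x * Real.log (1 + (x + 1) / c) := by
  have hz : 0 < x + (c + 1) := by linarith
  have h1 := logGamma_tangent (by linarith : 0 < c + 1) hz
  have h2 := mul_le_mul_of_nonneg_left (digamma_le_log hz) hx
  have h3 := mul_le_mul_of_nonneg_left (log_le_digamma_add_one hc) hx
  have h4 : 1 + (x + 1) / c = (x + (c + 1)) / c := by field_simp; ring
  rw [h4, Real.log_div hz.ne' hc.ne']
  unfold Phi
  nlinarith

lemma Phi_le_W {c x : ℝ} (hc : 1 / 2 < c) (hx : 0 ≤ x) : Phi c x ≤ W (c - 1 / 2) x := by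
  have hstep : ∀ n : ℕ, Phi c x - W (c - 1 / 2) x ≤ Phi (c + n) x - W (c + n - 1 / 2) x := by
    intro n
    induction n with
    | zero => simp
    | succ k ih =>
      have hk : (0 : ℝ) ≤ k := Nat.cast_nonneg k
      have h1 := Phi_shift (by linarith : 0 < c + k) hx
      have h2 := T_add_W_le (by linarith : 1 / 2 < c + k) hx
      have e1 : c + ((k + 1 : ℕ) : ℝ) = c + k + 1 := by push_cast; ring
      have e2 : c + (k : ℝ) + 1 - 1 / 2 = c + k + 1 / 2 := by ring
      rw [e1, e2]
      linarith
  have hbound : ∀ n : ℕ, Phi c x - W (c - 1 / 2) x ≤ x * Real.log (1 + (x + 1) / (c + n)) := by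
    intro n
    have hn : (0 : ℝ) ≤ n := Nat.cast_nonneg n
    have h1 := hstep (n + 1)
    have e1 : c + ((n + 1 : ℕ) : ℝ) = c + n + 1 := by push_cast; ring
    rw [e1] at h1
    have h2 := W_nonneg (by linarith : 0 < c + n + 1 - 1 / 2) hx
    have h3 := Phi_le_log (by linarith : 0 < c + n) hx
    linarith
  have hlim : Filter.Tendsto (fun n : ℕ => x * Real.log (1 + (x + 1) / (c + n)))
      Filter.atTop (nhds 0) := by
    have h1 : Filter.Tendsto (fun n : ℕ => (x + 1) / (c + n)) Filter.atTop (nhds 0) :=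
      (Filter.tendsto_atTop_add_const_left _ c tendsto_natCast_atTop_atTop).const_div_atTop _
    have h2 : Filter.Tendsto (fun n : ℕ => 1 + (x + 1) / (c + n)) Filter.atTop (nhds 1) := by
      simpa using h1.const_add 1
    have h3 := (h2.log one_ne_zero).const_mul x
    simpa using h3
  have := ge_of_tendsto' hlim hbound
  linarith

/-! ### The elementary majorant -/

/-- The end point value: `(1+u) log (1+u) - (1-u) log (1-u) < 2u` on `(0, 1)`. -/
lemma endpoint_neg {u : ℝ} (h0 : 0 < u) (h1 : u < 1) :
    (1 + u) * Real.log (1 + u) - (1 - u) * Real.log (1 - u) - 2 * u < 0 := by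
  have hd : ∀ t ∈ Set.Ico (0 : ℝ) 1, HasDerivAt
      (fun t => (1 + t) * Real.log (1 + t) - (1 - t) * Real.log (1 - t) - 2 * t)
      (Real.log (1 - t ^ 2)) t := by
    rintro t ⟨ht0, ht1⟩
    have hp : 0 < 1 + t := by linarith
    have hm : 0 < 1 - t := by linarith
    have e1 : HasDerivAt (fun t : ℝ => 1 + t) 1 t := (hasDerivAt_id t).const_add 1
    have e2 : HasDerivAt (fun t : ℝ => 1 - t) (-1) t := (hasDerivAt_id t).const_sub 1
    have h := ((e1.mul (e1.log hp.ne')).sub (e2.mul (e2.log hm.ne'))).sub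
      ((hasDerivAt_id t).const_mul 2)
    refine h.congr_deriv ?_
    rw [show 1 - t ^ 2 = (1 + t) * (1 - t) by ring, Real.log_mul hp.ne' hm.ne']
    field_simp
    ring
  have hanti : StrictAntiOn
      (fun t => (1 + t) * Real.log (1 + t) - (1 - t) * Real.log (1 - t) - 2 * t)
      (Set.Ico (0 : ℝ) 1) := by
    refine strictAntiOn_of_hasDerivWithinAt_neg (convex_Ico 0 1)
      (fun t ht => (hd t ht).continuousAt.continuousWithinAt)
      (fun t ht => (hd t (interior_subset ht)).hasDerivWithinAt) (fun t ht => ?_)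
    rw [interior_Ico] at ht
    obtain ⟨ht0, ht1⟩ := ht
    exact Real.log_neg (by nlinarith) (by nlinarith)
  have := hanti ⟨le_rfl, one_pos⟩ ⟨h0.le, h1⟩ h0
  simpa using this

/-- The elementary upper bound for the quantity of the theorem, with `a = y + 1`. -/
noncomputable def G (a x : ℝ) : ℝ := T a x + W (a + 1 / 2) x - x ^ 2 / (2 * a * (x + a))

lemma hasDerivAt_G {a x : ℝ} (ha : 0 < a) (hx : 0 ≤ x) :
    HasDerivAt (G a) (x * (1 / (x + (a + 1 / 2)) - x / (2 * a * (x + a) ^ 2))) x := by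
  have hz : 0 < x + a := by linarith
  have hb : 0 < x + (a + 1 / 2) := by linarith
  have e : HasDerivAt (fun t : ℝ => 2 * a * (t + a)) (2 * a * 1) x :=
    ((hasDerivAt_id x).add_const a).const_mul (2 * a)
  have h := ((hasDerivAt_T hz).add (hasDerivAt_W hb)).sub
    ((hasDerivAt_pow 2 x).div e (by positivity))
  refine h.congr_deriv ?_
  generalize x + (a + 1 / 2) = b at hb
  field_simp
  push_cast
  ring

lemma G_antitoneOn {a x₀ : ℝ} (ha : 0 < a) (ha' : a < 1 / 2) (h₀ : x₀ = 2 * a ^ 2 / (1 - 2 * a)) :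
    AntitoneOn (G a) (Set.Ici x₀) := by
  have hu : 0 < 1 - 2 * a := by linarith
  have hx₀ : 0 ≤ x₀ := by rw [h₀]; positivity
  refine antitoneOn_of_hasDerivWithinAt_nonpos (convex_Ici x₀)
    (fun t ht => (hasDerivAt_G ha (hx₀.trans ht)).continuousAt.continuousWithinAt)
    (fun t ht => (hasDerivAt_G ha (hx₀.trans (interior_subset ht))).hasDerivWithinAt)
    (fun t ht => ?_)
  have ht0 : x₀ ≤ t := interior_subset ht
  have htn : 0 ≤ t := hx₀.trans ht0
  have hz : 0 < t + a := by linarith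
  rw [h₀, div_le_iff₀ hu] at ht0
  refine mul_nonpos_of_nonneg_of_nonpos htn (sub_nonpos.2 ?_)
  rw [div_le_div_iff₀ (by linarith) (by positivity)]
  nlinarith [mul_nonneg (show 0 ≤ t * (1 - 2 * a) - 2 * a ^ 2 by linarith) hz.le]

lemma G_endpoint_neg {a : ℝ} (ha : 0 < a) (ha' : a < 1 / 2) :
    G a (2 * a ^ 2 / (1 - 2 * a)) < 0 := by
  have hm : 0 < 1 - 2 * a := by linarith
  have hp : 0 < 1 + 2 * a := by linarith
  have key := endpoint_neg (u := 2 * a) (by linarith) (by linarith)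
  have e1 : 2 * a ^ 2 / (1 - 2 * a) + a = a / (1 - 2 * a) := by field_simp; ring
  have e2 : 2 * a ^ 2 / (1 - 2 * a) + (a + 1 / 2) = (1 / 2) / (1 - 2 * a) := by field_simp; ring
  have e3 : a + 1 / 2 = (1 / 2) * (1 + 2 * a) := by ring
  have e4 : 2 * a ^ 2 / (1 - 2 * a) / (a / (1 - 2 * a)) = 2 * a := by field_simp
  have e5 : (2 * a ^ 2 / (1 - 2 * a)) ^ 2 / (2 * a * (a / (1 - 2 * a)))
      = 2 * a ^ 2 / (1 - 2 * a) := by field_simp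
  unfold G T W
  rw [e1, e2, e4, e5, Real.log_div ha.ne' hm.ne', Real.log_div (by norm_num) hm.ne', e3,
    Real.log_mul (by norm_num) hp.ne']
  nlinarith

theorem stmt_1 (y : ℝ) (hy : y ∈ Set.Ioo (-1 : ℝ) (-1/2))
    (x : ℝ) (hx : -2 * (y + 1) ^ 2 / (1 + 2 * y) ≤ x) :
    x * digamma (x + y + 1) - Real.log (Real.Gamma (x + y + 1)) +
      Real.log (Real.Gamma (y + 1)) - x ^ 2 / (2 * (y + 1) * (x + y + 1)) < 0 := by
  obtain ⟨hy1, hy2⟩ := hy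
  obtain ⟨a, rfl⟩ : ∃ a, y = a - 1 := ⟨y + 1, by ring⟩
  have ha : 0 < a := by linarith
  have ha' : a < 1 / 2 := by linarith
  have hm : 0 < 1 - 2 * a := by linarith
  have e0 : -2 * (a - 1 + 1) ^ 2 / (1 + 2 * (a - 1)) = 2 * a ^ 2 / (1 - 2 * a) := by
    rw [← neg_div_neg_eq]; congr 1 <;> ring
  rw [e0] at hx
  have hx0 : 0 ≤ x := le_trans (by positivity) hx
  have h1 := Phi_shift ha hx0
  have h2 := Phi_le_W (by linarith : 1 / 2 < a + 1) hx0
  have h3 := G_antitoneOn ha ha' rfl (Set.mem_Ici.2 le_rfl) (Set.mem_Ici.2 hx) hx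
  have h4 := G_endpoint_neg ha ha'
  rw [show a + 1 - 1 / 2 = a + 1 / 2 by ring] at h2
  rw [show x + (a - 1) + 1 = x + a by ring, show a - 1 + 1 = a by ring]
  have h5 : G a x = T a x + W (a + 1 / 2) x - x ^ 2 / (2 * a * (x + a)) := rfl
  unfold Phi at h1 h2
  linarith
end

section
/- For every t ∈ (0, 1/2) and every x ≥ −2t^2/(2t−1) (note this lower bound is positive, so x > 0), the inequality (Γ(x+t)/Γ(t))^{1/x} > exp(ψ(x+t) − x/(2t(x+t))) holds. -/
/-!
Put `y = x + t`. Taking logarithms, the claim is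
`log Γ(y) - log Γ(t) > x ψ(y) - x² / (2 t y)`.

The analytic input is that `H(s) = log Γ(s + 1) - A(s)` is concave on `(0, ∞)`, where
`A'(s) = log (s + 1/2)`; equivalently `ψ'(s + 1) ≤ 1 / (s + 1/2)`
(`concaveOn_log_Gamma_sub_shiftedLogPrim`). It is obtained from Euler's limit formula for `log Γ`:
each approximant differs from an affine function by a finite sum of the functions
`A(s + m + 1) - A(s + m) - log (s + m + 1)` and by `-A(s + N)`, and all of these have nonpositive
second derivative.

Concavity gives `H(y) - H(t) ≥ (y - t) H'(y)`, in which `H'(y) = ψ(y) + 1/y - log (y + 1/2)`. The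
terms containing `ψ` cancel against those of the claim, and there remains the elementary inequality
`0 < E(y)` of `elementary_bound`. The function `E` is increasing for `y ≥ y₀ = t / (1 - 2t)`, and
at `y₀`, with `v = 2 y₀`, positivity reads `(1 + 2v) log (1 + 2v) < 2v (1 + log (1 + v))`, which
follows by differentiating once and using `log (1 + z) < z`.
-/

open Real

/-- An antiderivative of `s ↦ log (s + 1/2)` on `(-1/2, ∞)`. -/
noncomputable def shiftedLogPrim (s : ℝ) : ℝ := (s + 1 / 2) * log (s + 1 / 2) - s

lemma hasDerivAt_shiftedLogPrim {s : ℝ} (hs : 0 < s + 1 / 2) :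
    HasDerivAt shiftedLogPrim (log (s + 1 / 2)) s := by
  have h1 : HasDerivAt (fun s : ℝ => s + 1 / 2) 1 s := (hasDerivAt_id s).add_const _
  have h := (h1.mul (h1.log hs.ne')).sub (hasDerivAt_id s)
  convert! h using 1
  rw [mul_one_div, div_self hs.ne']
  ring

lemma hasDerivAt_shiftedLogPrim_add {s c : ℝ} (hs : 0 < s + c + 1 / 2) :
    HasDerivAt (fun s => shiftedLogPrim (s + c)) (log (s + c + 1 / 2)) s :=
  (hasDerivAt_shiftedLogPrim hs).comp_add_const s c

lemma hasDerivAt_log_add {s c : ℝ} (hs : 0 < s + c) :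
    HasDerivAt (fun s => log (s + c)) (1 / (s + c)) s :=
  ((hasDerivAt_id s).add_const c).log hs.ne'

lemma concaveOn_Ioi_of_hasDerivAt2 {f f' f'' : ℝ → ℝ}
    (hf : ∀ s, 0 < s → HasDerivAt f (f' s) s) (hf' : ∀ s, 0 < s → HasDerivAt f' (f'' s) s)
    (h : ∀ s, 0 < s → f'' s ≤ 0) : ConcaveOn ℝ (Set.Ioi 0) f := by
  apply concaveOn_of_hasDerivWithinAt2_nonpos (f' := f') (f'' := f'') (convex_Ioi 0)
  · exact fun s hs => (hf s hs).continuousAt.continuousWithinAt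
  · rw [interior_Ioi]; exact fun s hs => (hf s hs).hasDerivWithinAt
  · rw [interior_Ioi]; exact fun s hs => (hf' s hs).hasDerivWithinAt
  · rw [interior_Ioi]; exact h

lemma concaveOn_neg_shiftedLogPrim {c : ℝ} (hc : 0 ≤ c) :
    ConcaveOn ℝ (Set.Ioi 0) (fun s => -shiftedLogPrim (s + c)) := by
  apply concaveOn_Ioi_of_hasDerivAt2 (f' := fun s => -log (s + (c + 1 / 2)))
    (f'' := fun s => -(1 / (s + (c + 1 / 2))))
  · intro s hs
    rw [← add_assoc]
    exact (hasDerivAt_shiftedLogPrim_add (by positivity)).neg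
  · intro s hs
    exact (hasDerivAt_log_add (by positivity)).neg
  · intro s hs
    have : 0 < 1 / (s + (c + 1 / 2)) := by positivity
    linarith

/-- The mean of `log` over an interval of length `1` minus its value at the midpoint is concave:
its second derivative is `1/u² - 1/(u² - 1/4)` at the midpoint `u`. -/
lemma concaveOn_shiftedLogPrim_step {c : ℝ} (hc : 0 ≤ c) :
    ConcaveOn ℝ (Set.Ioi 0)
      (fun s => shiftedLogPrim (s + (c + 1)) - shiftedLogPrim (s + c) - log (s + (c + 1))) := by
  apply concaveOn_Ioi_of_hasDerivAt2
    (f' := fun s => log (s + (c + 3 / 2)) - log (s + (c + 1 / 2)) - (s + (c + 1))⁻¹)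
    (f'' := fun s => 1 / (s + (c + 3 / 2)) - 1 / (s + (c + 1 / 2)) - -1 / (s + (c + 1)) ^ 2)
  · intro s hs
    have h1 := hasDerivAt_shiftedLogPrim_add (s := s) (c := c + 1) (by positivity)
    have h2 := hasDerivAt_shiftedLogPrim_add (s := s) (c := c) (by positivity)
    have h3 := hasDerivAt_log_add (s := s) (c := c + 1) (by positivity)
    convert! (h1.sub h2).sub h3 using 1
    rw [one_div (s + (c + 1)), show s + (c + 1) + 1 / 2 = s + (c + 3 / 2) by ring,
      show s + c + 1 / 2 = s + (c + 1 / 2) by ring]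
  · intro s hs
    have h1 := hasDerivAt_log_add (s := s) (c := c + 3 / 2) (by positivity)
    have h2 := hasDerivAt_log_add (s := s) (c := c + 1 / 2) (by positivity)
    have h3 := ((hasDerivAt_id s).add_const (c + 1)).inv (by simp only [id]; positivity)
    exact (h1.sub h2).sub h3
  · intro s hs
    have e : 1 / (s + (c + 3 / 2)) - 1 / (s + (c + 1 / 2)) - -1 / (s + (c + 1)) ^ 2
        = -(1 / (4 * (s + (c + 3 / 2)) * (s + (c + 1 / 2)) * (s + (c + 1)) ^ 2)) := by
      field_simp
      ring
    rw [e]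
    have : 0 < 1 / (4 * (s + (c + 3 / 2)) * (s + (c + 1 / 2)) * (s + (c + 1)) ^ 2) := by
      positivity
    linarith

lemma concaveOn_shiftedLogPrim_sum (N : ℕ) :
    ConcaveOn ℝ (Set.Ioi 0) (fun s => shiftedLogPrim (s + N) - shiftedLogPrim s
      - ∑ m ∈ Finset.range N, log (s + 1 + m)) := by
  induction N with
  | zero => simpa using concaveOn_const (0 : ℝ) (convex_Ioi (0 : ℝ))
  | succ n ih =>
    have h := ih.add (concaveOn_shiftedLogPrim_step (c := n) (Nat.cast_nonneg n))
    convert! h using 1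
    funext s
    simp only [Pi.add_apply, Finset.sum_range_succ, Nat.cast_add, Nat.cast_one]
    rw [show s + 1 + (n : ℝ) = s + (n + 1) by ring]
    ring

lemma concaveOn_logGammaSeq_sub (n : ℕ) :
    ConcaveOn ℝ (Set.Ioi 0)
      (fun s => BohrMollerup.logGammaSeq (s + 1) n - shiftedLogPrim s) := by
  have h := (concaveOn_shiftedLogPrim_sum (n + 1)).add
    (concaveOn_neg_shiftedLogPrim (c := (n + 1 : ℕ)) (Nat.cast_nonneg _))
  have h2 : ConcaveOn ℝ (Set.Ioi 0)
      (fun s : ℝ => (s + 1) * log n + log (Nat.factorial n)) := by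
    refine ⟨convex_Ioi 0, fun a _ b _ p q _ _ hpq => le_of_eq ?_⟩
    simp only [smul_eq_mul]
    linear_combination (log n + log (Nat.factorial n)) * hpq
  convert! h.add h2 using 1
  funext s
  simp only [Pi.add_apply, BohrMollerup.logGammaSeq]
  ring

theorem concaveOn_log_Gamma_sub_shiftedLogPrim :
    ConcaveOn ℝ (Set.Ioi 0) (fun s => log (Gamma (s + 1)) - shiftedLogPrim s) := by
  have lim : ∀ s ∈ Set.Ioi (0 : ℝ), Filter.Tendsto
      (fun n => BohrMollerup.logGammaSeq (s + 1) n - shiftedLogPrim s) Filter.atTop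
      (nhds (log (Gamma (s + 1)) - shiftedLogPrim s)) := by
    intro s hs
    have hs' : 0 < s := hs
    exact (BohrMollerup.tendsto_log_gamma (by positivity)).sub_const _
  refine ⟨convex_Ioi 0, fun a ha b hb p q hp hq hpq => ?_⟩
  exact le_of_tendsto_of_tendsto' (((lim a ha).const_smul p).add ((lim b hb).const_smul q))
    (lim _ ((convex_Ioi (0 : ℝ)) ha hb hp hq hpq))
    (fun n => (concaveOn_logGammaSeq_sub n).2 ha hb hp hq hpq)

/-- The tangent-line inequality for the concave function `log Γ(s + 1) - A(s)`, written in terms of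
`log Γ(s) = log Γ(s + 1) - log s`. -/
lemma log_Gamma_sub_lower_bound {t y : ℝ} (ht : 0 < t) (hty : t < y) :
    (y - t) * (digamma y + 1 / y - log (y + 1 / 2)) ≤
      (log (Gamma y) + log y - shiftedLogPrim y) - (log (Gamma t) + log t - shiftedLogPrim t) := by
  have hy : 0 < y := ht.trans hty
  have hconc : ConcaveOn ℝ (Set.Ioi 0)
      (fun s => log (Gamma s) + log s - shiftedLogPrim s) := by
    refine concaveOn_log_Gamma_sub_shiftedLogPrim.congr fun s hs => ?_
    have hs' : 0 < s := hs
    simp only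
    rw [Gamma_add_one hs'.ne', log_mul hs'.ne' (Gamma_pos_of_pos hs').ne']
    ring
  have hG : HasDerivAt Gamma (deriv Gamma y) y :=
    (differentiableAt_Gamma fun m => by
      have : (0 : ℝ) ≤ m := Nat.cast_nonneg m
      linarith).hasDerivAt
  have hd : HasDerivAt (fun s => log (Gamma s) + log s - shiftedLogPrim s)
      (digamma y + 1 / y - log (y + 1 / 2)) y := by
    rw [one_div y]
    exact ((hG.log (Gamma_pos_of_pos hy).ne').add (hasDerivAt_log hy.ne')).sub
      (hasDerivAt_shiftedLogPrim (by positivity))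
  have h := hconc.le_slope_of_hasDerivAt ht hy hty hd
  rw [slope_def_field, le_div_iff₀ (sub_pos.2 hty)] at h
  linarith

lemma log_bound {v : ℝ} (hv : 0 < v) :
    (1 + 2 * v) * log (1 + 2 * v) < 2 * v * (1 + log (1 + v)) := by
  have hd : ∀ w : ℝ, 0 ≤ w → HasDerivAt
      (fun w => 2 * w * (1 + log (1 + w)) - (1 + 2 * w) * log (1 + 2 * w))
      (2 * (1 + log (1 + w)) + 2 * w * (1 / (1 + w)) - (2 * log (1 + 2 * w) + 2)) w := by
    intro w hw
    have h1 : HasDerivAt (fun w : ℝ => 1 + w) 1 w := (hasDerivAt_id w).const_add 1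
    have h2 : HasDerivAt (fun w : ℝ => 2 * w) 2 w := by
      simpa using (hasDerivAt_id w).const_mul (2 : ℝ)
    have h3 : HasDerivAt (fun w : ℝ => 1 + 2 * w) 2 w := h2.const_add 1
    have h := (h2.mul ((h1.log (by positivity)).const_add 1)).sub
      (h3.mul (h3.log (by positivity)))
    convert! h using 1
    field_simp
  have hmono : StrictMonoOn
      (fun w : ℝ => 2 * w * (1 + log (1 + w)) - (1 + 2 * w) * log (1 + 2 * w)) (Set.Ici 0) := by
    refine strictMonoOn_of_deriv_pos (convex_Ici 0)
      (fun w hw => (hd w hw).continuousAt.continuousWithinAt) fun w hw => ?_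
    rw [interior_Ici] at hw
    have hw' : 0 < w := hw
    rw [(hd w hw'.le).deriv]
    -- `log ((1 + 2w) / (1 + w)) < (1 + 2w) / (1 + w) - 1 = w / (1 + w)`
    have hne : (1 + 2 * w) / (1 + w) ≠ 1 := by
      intro h
      rw [div_eq_one_iff_eq (by positivity)] at h
      linarith
    have h := log_lt_sub_one_of_pos (by positivity) hne
    rw [log_div (by positivity) (by positivity)] at h
    have e : (1 + 2 * w) / (1 + w) - 1 = w * (1 / (1 + w)) := by
      field_simp
      ring
    rw [e] at h
    linarith
  have h := hmono (Set.mem_Ici.2 le_rfl) (Set.mem_Ici.2 hv.le) hv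
  simp at h
  linarith

lemma elementary_bound_endpoint {y t : ℝ} (hy : 0 < y) (ht : t = y / (1 + 2 * y)) :
    0 < (y - t) ^ 2 / (2 * t * y) + (y - t) / y - (y - t) - (log y - log t)
      + (t + 1 / 2) * (log (y + 1 / 2) - log (t + 1 / 2)) := by
  have hb := log_bound (v := 2 * y) (by positivity)
  have h1 : log t = log y - log (1 + 2 * y) := by
    rw [ht, log_div (by positivity) (by positivity)]
  have h2 : log (y + 1 / 2) = log (1 + 2 * y) - log 2 := by
    rw [← log_div (by positivity) (by positivity)]
    congr 1; ring
  have h3 : log (t + 1 / 2) = log (1 + 2 * (2 * y)) - log 2 - log (1 + 2 * y) := by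
    rw [← log_div (by positivity) (by positivity), ← log_div (by positivity) (by positivity)]
    congr 1; rw [ht]; field_simp; ring
  rw [h1, h2, h3, ht]
  have e : (y - y / (1 + 2 * y)) ^ 2 / (2 * (y / (1 + 2 * y)) * y)
      + (y - y / (1 + 2 * y)) / y - (y - y / (1 + 2 * y)) - (log y - (log y - log (1 + 2 * y)))
      + (y / (1 + 2 * y) + 1 / 2) * (log (1 + 2 * y) - log 2
        - (log (1 + 2 * (2 * y)) - log 2 - log (1 + 2 * y)))
      = (2 * (2 * y) * (1 + log (1 + 2 * y)) - (1 + 2 * (2 * y)) * log (1 + 2 * (2 * y)))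
        / (2 * (1 + 2 * y)) := by
    field_simp
    ring
  rw [e]
  exact div_pos (by linarith) (by positivity)

lemma elementary_bound {y t : ℝ} (ht : 0 < t) (ht' : t < 1 / 2) (hy : t / (1 - 2 * t) ≤ y) :
    0 < (y - t) ^ 2 / (2 * t * y) + (y - t) / y - (y - t) - (log y - log t)
      + (t + 1 / 2) * (log (y + 1 / 2) - log (t + 1 / 2)) := by
  have h12 : 0 < 1 - 2 * t := by linarith
  set y₀ := t / (1 - 2 * t) with hy₀
  have hy₀p : 0 < y₀ := by positivity
  have hty₀ : t < y₀ := by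
    rw [hy₀, lt_div_iff₀ h12]; nlinarith
  have h0 := elementary_bound_endpoint (y := y₀) (t := t) hy₀p (by
    have hne : 1 + 2 * y₀ = 1 / (1 - 2 * t) := by rw [hy₀]; field_simp; ring
    rw [hne, hy₀, div_div_eq_mul_div, div_one, div_mul_cancel₀ _ h12.ne'])
  have hd : ∀ w : ℝ, 0 < w → HasDerivAt
      (fun w => (w - t) ^ 2 / (2 * t * w) + (w - t) / w - (w - t) - (log w - log t)
        + (t + 1 / 2) * (log (w + 1 / 2) - log (t + 1 / 2)))
      ((w - t) * (1 / (2 * t * w) - 1 / (2 * w ^ 2) - 1 / (w + 1 / 2))) w := by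
    intro w hw
    have h1 : HasDerivAt (fun w : ℝ => w - t) 1 w := (hasDerivAt_id w).sub_const t
    have h2 : HasDerivAt (fun w : ℝ => 2 * t * w) (2 * t) w := by
      simpa using (hasDerivAt_id w).const_mul (2 * t)
    have h3 := hasDerivAt_log_add (s := w) (c := 1 / 2) (by positivity)
    have h := (((((h1.pow 2).div h2 (by positivity)).add
      (h1.div (hasDerivAt_id w) hw.ne')).sub h1).sub
      ((hasDerivAt_log hw.ne').sub_const (log t))).add
      ((h3.sub_const (log (t + 1 / 2))).const_mul (t + 1 / 2))
    convert! h using 1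
    simp only [id, Pi.pow_apply]
    field_simp
    ring
  have hmono : MonotoneOn
      (fun w => (w - t) ^ 2 / (2 * t * w) + (w - t) / w - (w - t) - (log w - log t)
        + (t + 1 / 2) * (log (w + 1 / 2) - log (t + 1 / 2))) (Set.Ici y₀) := by
    refine monotoneOn_of_deriv_nonneg (convex_Ici y₀)
      (fun w hw => (hd w (hy₀p.trans_le hw)).continuousAt.continuousWithinAt)
      (fun w hw => ?_) fun w hw => ?_
    · rw [interior_Ici] at hw
      exact (hd w (hy₀p.trans hw)).differentiableAt.differentiableWithinAt
    · rw [interior_Ici] at hw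
      have hw' : y₀ < w := hw
      have hwp : 0 < w := hy₀p.trans hw'
      rw [(hd w hwp).deriv]
      refine mul_nonneg (by linarith) ?_
      -- `y₀ ≤ w` says `t ≤ w (1 - 2t)`, that is `1/(2t) ≥ 1 + 1/(2w)`
      have hk : t ≤ w * (1 - 2 * t) := by
        rw [← div_le_iff₀ h12]; exact hw'.le
      have e1 : 1 / (2 * t * w) - 1 / (2 * w ^ 2) - 1 / w
          = (w * (1 - 2 * t) - t) / (2 * t * w ^ 2) := by
        field_simp
        ring
      have e2 : 0 ≤ (w * (1 - 2 * t) - t) / (2 * t * w ^ 2) :=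
        div_nonneg (by linarith) (by positivity)
      have e3 : 1 / (w + 1 / 2) ≤ 1 / w := one_div_le_one_div_of_le hwp (by linarith)
      linarith
  exact h0.trans_le (hmono (Set.mem_Ici.2 le_rfl) (Set.mem_Ici.2 hy) hy)

theorem stmt_3 (t : ℝ) (ht : t ∈ Set.Ioo (0 : ℝ) (1/2))
    (x : ℝ) (hx : -2 * t ^ 2 / (2 * t - 1) ≤ x) :
    (Real.Gamma (x + t) / Real.Gamma t) ^ (1 / x) >
      Real.exp (digamma (x + t) - x / (2 * t * (x + t))) := by
  obtain ⟨ht0, ht1⟩ := ht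
  have h12 : 0 < 1 - 2 * t := by linarith
  have hx0 : -2 * t ^ 2 / (2 * t - 1) = t / (1 - 2 * t) - t := by
    have : 2 * t - 1 ≠ 0 := by linarith
    rw [show 2 * t - 1 = -(1 - 2 * t) by ring]
    field_simp
    ring
  have hxp : 0 < x := by
    refine lt_of_lt_of_le ?_ hx
    rw [show -2 * t ^ 2 / (2 * t - 1) = 2 * t ^ 2 / (1 - 2 * t) by
      rw [show 2 * t - 1 = -(1 - 2 * t) by ring, div_neg]; ring]
    positivity
  have hE := elementary_bound (y := x + t) ht0 ht1 (by linarith)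
  have hL := log_Gamma_sub_lower_bound (y := x + t) ht0 (by linarith)
  have hGy : 0 < Gamma (x + t) := Gamma_pos_of_pos (by positivity)
  have hGt : 0 < Gamma t := Gamma_pos_of_pos ht0
  rw [gt_iff_lt, rpow_def_of_pos (by positivity), exp_lt_exp, log_div hGy.ne' hGt.ne',
    mul_one_div, lt_div_iff₀ hxp]
  simp only [add_sub_cancel_right, shiftedLogPrim] at hE hL
  have e : (digamma (x + t) - x / (2 * t * (x + t))) * x
      = x * digamma (x + t) - x ^ 2 / (2 * t * (x + t)) := by ring
  have e2 : x * (1 / (x + t)) = x / (x + t) := by ring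
  rw [e]
  linarith
end

section
/- For every real number x > 0, the inequality ln(1 + 1/x) < (2/(2x+1)) · (1 + 1/(12x) − 1/(12(x+1))) holds. -/
/-!
With `t = 1 / (2x + 1) ∈ (0, 1)`, the left side is the series `∑ 2 t ^ (2k+1) / (2k+1)`.
Since `1 / (12 x) - 1 / (12 (x + 1)) = t² / (3 (1 - t²))`, the right side is
`2 t (1 + ∑_{k ≥ 1} t ^ (2k) / 3)`. The two series agree for `k = 0, 1`, and for `k ≥ 2` the
coefficient `1 / (2k+1)` is smaller than `1 / 3`.
-/

theorem stmt_10 (x : ℝ) (hx : 0 < x) :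
    Real.log (1 + 1 / x) <
      2 / (2 * x + 1) * (1 + 1 / (12 * x) - 1 / (12 * (x + 1))) := by
  have hlog := Real.hasSum_log_one_add_inv hx
  have ht0 : 0 < 1 / (2 * x + 1) := by positivity
  have ht1 : 1 / (2 * x + 1) < 1 := by
    rw [div_lt_one (by positivity)]; linarith
  have hgeom := hasSum_geometric_of_lt_one (r := (1 / (2 * x + 1)) ^ 2) (by positivity)
    (pow_lt_one₀ ht0.le ht1 two_ne_zero)
  -- The right side as `2 t` times the series with terms `1, t²/3, t⁴/3, …`: a third of the
  -- geometric series, with `2 / 3` added to the term `k = 0`.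
  have hsum := ((hgeom.mul_left (1 / 3)).add
    (hasSum_ite_eq (0 : ℕ) (2 / 3 : ℝ))).mul_left (2 * (1 / (2 * x + 1)))
  have hval : 2 * (1 / (2 * x + 1)) * (1 / 3 * (1 - (1 / (2 * x + 1)) ^ 2)⁻¹ + 2 / 3)
      = 2 / (2 * x + 1) * (1 + 1 / (12 * x) - 1 / (12 * (x + 1))) := by
    have h : 1 - (1 / (2 * x + 1)) ^ 2 = 4 * x * (x + 1) / (2 * x + 1) ^ 2 := by
      field_simp; ring
    rw [h]
    field_simp
    ring
  rw [hval] at hsum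
  rw [one_div x]
  generalize 1 / (2 * x + 1) = t at *
  refine hasSum_lt (i := 2) (fun k => ?_) ?_ hlog hsum
  · rcases k with _ | k
    · norm_num
    · have hc : (1 : ℝ) / (2 * ((k + 1 : ℕ) : ℝ) + 1) ≤ 1 / 3 := by
        apply one_div_le_one_div_of_le (by norm_num)
        push_cast
        linarith [Nat.cast_nonneg (α := ℝ) k]
      have hp : 0 ≤ 2 * t * (t ^ 2) ^ (k + 1) := by positivity
      calc _ = 1 / (2 * ((k + 1 : ℕ) : ℝ) + 1) * (2 * t * (t ^ 2) ^ (k + 1)) := by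
              rw [pow_succ t (2 * (k + 1)), pow_mul]; ring
        _ ≤ 1 / 3 * (2 * t * (t ^ 2) ^ (k + 1)) := mul_le_mul_of_nonneg_right hc hp
        _ = _ := by simp; ring
  · have hp : 0 < t ^ 5 := by positivity
    norm_num
    ring_nf
    linarith
end
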